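/- Let N ≥ 2, n = N−1, R_N = √(N²−1)/2, and define X_a = J_a / R_N on (ℂ²)^{⊗n}. For every coherent state ξ = v(θ,φ)^{⊗n}: Σ_{a=1}^{3} ( ⟨ξ, X_a² ξ⟩ − ⟨ξ, X_a ξ⟩² ) = 2/(N+1), and Σ_{a=1}^{3} ⟨ξ, X_a ξ⟩² = (N−1)/(N+1). (This says coherent states minimize the position uncertainty on the fuzzy sphere, with Δ² = 1 − r_N² where r_N² = (N−1)/(N+1).) -/

import Mathlib

open scoped BigOperators ComplexConjugate
open Matrix

noncomputable section

/-- The three Pauli matrices acting on ℂ². -/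
def pauli : Fin 3 → Matrix (Fin 2) (Fin 2) ℂ :=
  ![!![0, 1; 1, 0], !![0, -Complex.I; Complex.I, 0], !![1, 0; 0, -1]]

/-- The coherent spinor v(θ,φ) = (cos(θ/2), e^{iφ} sin(θ/2)) ∈ ℂ². -/
def vcoh (θ φ : ℝ) : Fin 2 → ℂ :=
  ![(Real.cos (θ / 2) : ℂ), Complex.exp (Complex.I * (φ : ℂ)) * (Real.sin (θ / 2) : ℂ)]

/-- The point x(θ,φ) = (sin θ cos φ, sin θ sin φ, cos θ) ∈ S² ⊂ ℝ³. -/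
def xpt (θ φ : ℝ) : Fin 3 → ℝ :=
  ![Real.sin θ * Real.cos φ, Real.sin θ * Real.sin φ, Real.cos θ]

/-- The n-th tensor power u^{⊗n} of u ∈ ℂ², realized concretely as the function
    (Fin n → Fin 2) → ℂ, f ↦ ∏ i, u (f i). -/
def tpow (n : ℕ) (u : Fin 2 → ℂ) : (Fin n → Fin 2) → ℂ :=
  fun f => ∏ i, u (f i)

/-- The standard Hermitian inner product (antilinear in the first argument). -/
def cinner {ι : Type} [Fintype ι] (ξ η : ι → ℂ) : ℂ :=
  ∑ f, conj (ξ f) * η f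

/-- The angular momentum operator J_a = Σ_i 1⊗…⊗(σ_a/2)⊗…⊗1 on (ℂ²)^{⊗n},
    as a matrix acting (via `Matrix.mulVec`) on the concrete model
    (Fin n → Fin 2) → ℂ of (ℂ²)^{⊗n}. -/
def Jmat (n : ℕ) (a : Fin 3) : Matrix (Fin n → Fin 2) (Fin n → Fin 2) ℂ :=
  Matrix.of fun f g => ∑ i : Fin n, ∑ k : Fin 2,
    (pauli a (f i) k / 2) * (if Function.update f i k = g then 1 else 0)

/-- half Pauli matrix acting on a spinor -/
def hp (a : Fin 3) (u : Fin 2 → ℂ) : Fin 2 → ℂ := fun x => ∑ k, pauli a x k / 2 * u k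

/-- product vector -/
def pv {n : ℕ} (w : Fin n → Fin 2 → ℂ) : (Fin n → Fin 2) → ℂ := fun f => ∏ i, w i (f i)

lemma pv_update {n : ℕ} (w : Fin n → Fin 2 → ℂ) (i : Fin n) (u : Fin 2 → ℂ) (f : Fin n → Fin 2) :
    pv (Function.update w i u) f = u (f i) * ∏ j ∈ Finset.univ.erase i, w j (f j) := by
  unfold pv
  rw [← Finset.mul_prod_erase _ _ (Finset.mem_univ i)]
  congr 1
  · simp
  · refine Finset.prod_congr rfl fun j hj => ?_
    rw [Function.update_of_ne (Finset.ne_of_mem_erase hj)]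

lemma pv_at_update {n : ℕ} (w : Fin n → Fin 2 → ℂ) (i : Fin n) (k : Fin 2) (f : Fin n → Fin 2) :
    pv w (Function.update f i k) = w i k * ∏ j ∈ Finset.univ.erase i, w j (f j) := by
  unfold pv
  rw [← Finset.mul_prod_erase _ _ (Finset.mem_univ i)]
  congr 1
  · simp
  · refine Finset.prod_congr rfl fun j hj => ?_
    rw [Function.update_of_ne (Finset.ne_of_mem_erase hj)]

lemma Jmat_pv {n : ℕ} (a : Fin 3) (w : Fin n → Fin 2 → ℂ) :
    (Jmat n a).mulVec (pv w) = ∑ i, pv (Function.update w i (hp a (w i))) := by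
  funext f
  rw [Finset.sum_apply]
  simp only [Matrix.mulVec, dotProduct, Jmat, Matrix.of_apply, Finset.sum_mul]
  rw [Finset.sum_comm]
  refine Finset.sum_congr rfl fun i _ => ?_
  rw [Finset.sum_comm, pv_update, hp, Finset.sum_mul]
  refine Finset.sum_congr rfl fun k _ => ?_
  rw [mul_assoc, ← pv_at_update]
  simp [mul_assoc]

lemma cinner_pv {n : ℕ} (w w' : Fin n → Fin 2 → ℂ) :
    cinner (pv w) (pv w') = ∏ i, cinner (w i) (w' i) := by
  unfold cinner pv
  rw [Finset.prod_univ_sum, Fintype.piFinset_univ]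
  refine Finset.sum_congr rfl fun f _ => ?_
  rw [map_prod, Finset.prod_mul_distrib]

lemma cinner_sum {ι κ : Type} [Fintype ι] [Fintype κ] (x : ι → ℂ) (y : κ → ι → ℂ) :
    cinner x (∑ i, y i) = ∑ i, cinner x (y i) := by
  unfold cinner
  rw [Finset.sum_comm]
  refine Finset.sum_congr rfl fun f _ => ?_
  rw [Finset.sum_apply, Finset.mul_sum]

lemma cinner_smul {ι : Type} [Fintype ι] (x : ι → ℂ) (c : ℂ) (y : ι → ℂ) :
    cinner x (c • y) = c * cinner x y := by
  unfold cinner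
  rw [Finset.mul_sum]
  refine Finset.sum_congr rfl fun f _ => ?_
  rw [Pi.smul_apply, smul_eq_mul]; ring

lemma cinner_one_update {n : ℕ} (v : Fin 2 → ℂ) (w : Fin n → Fin 2 → ℂ) (i : Fin n)
    (u : Fin 2 → ℂ) :
    cinner (pv fun _ => v) (pv (Function.update w i u))
      = cinner v u * ∏ j ∈ Finset.univ.erase i, cinner v (w j) := by
  rw [cinner_pv, ← Finset.mul_prod_erase _ _ (Finset.mem_univ i)]
  congr 1
  · simp
  · refine Finset.prod_congr rfl fun j hj => ?_
    rw [Function.update_of_ne (Finset.ne_of_mem_erase hj)]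

lemma exp_J {n : ℕ} (a : Fin 3) (v : Fin 2 → ℂ) (hv : cinner v v = 1) :
    cinner (tpow n v) ((Jmat n a).mulVec (tpow n v)) = n * cinner v (hp a v) := by
  change cinner (pv fun _ => v) ((Jmat n a).mulVec (pv fun _ => v)) = _
  rw [Jmat_pv, cinner_sum]
  simp [cinner_one_update, hv]

lemma exp_JJ {n : ℕ} (a : Fin 3) (v : Fin 2 → ℂ) (hv : cinner v v = 1) :
    cinner (tpow n v) ((Jmat n a * Jmat n a).mulVec (tpow n v))
      = n * cinner v (hp a (hp a v)) + n * (n - 1) * cinner v (hp a v) ^ 2 := by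
  change cinner (pv fun _ => v) ((Jmat n a * Jmat n a).mulVec (pv fun _ => v)) = _
  rw [← Matrix.mulVec_mulVec, Jmat_pv, Matrix.mulVec_sum, cinner_sum]
  have key : ∀ i : Fin n, cinner (pv fun _ => v)
      ((Jmat n a).mulVec (pv (Function.update (fun _ => v) i (hp a v))))
      = cinner v (hp a (hp a v)) + (n - 1) * cinner v (hp a v) ^ 2 := by
    intro i
    rw [Jmat_pv, cinner_sum, ← Finset.add_sum_erase _ _ (Finset.mem_univ i)]
    congr 1
    · rw [Function.update_idem, cinner_one_update]
      simp [hv]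
    · have : ∀ j ∈ Finset.univ.erase i, cinner (pv fun _ => v)
          (pv (Function.update (Function.update (fun _ => v) i (hp a v)) j
            (hp a (Function.update (fun _ => v) i (hp a v) j)))) = cinner v (hp a v) ^ 2 := by
        intro j hj
        have hji := Finset.ne_of_mem_erase hj
        rw [Function.update_of_ne hji, Function.update_comm hji.symm, cinner_one_update,
          ← Finset.mul_prod_erase _ _ (Finset.mem_erase.2 ⟨hji, Finset.mem_univ j⟩)]
        rw [Finset.prod_eq_one]
        · simp [sq]
        · intro k hk
          rw [Function.update_of_ne (Finset.ne_of_mem_erase hk), hv]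
      rw [Finset.sum_congr rfl this, Finset.sum_const, Finset.card_erase_of_mem (Finset.mem_univ i)]
      have hn : 1 ≤ n := by have := i.2; omega
      simp [Nat.cast_sub hn]
  rw [Finset.sum_congr rfl fun i _ => key i]
  simp
  ring

lemma hp_hp (a : Fin 3) (v : Fin 2 → ℂ) : hp a (hp a v) = (1 / 4 : ℂ) • v := by
  have hI := Complex.I_mul_I
  funext x
  fin_cases a <;> fin_cases x <;> simp [hp, pauli, Fin.sum_univ_two] <;>
    first
    | ring1
    | linear_combination (-v 0 / 4) * hI
    | linear_combination (-v 1 / 4) * hI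

lemma vcoh_unit (θ φ : ℝ) : cinner (vcoh θ φ) (vcoh θ φ) = 1 := by
  have h1 : Complex.exp (-(Complex.I * φ)) * Complex.exp (Complex.I * φ) = 1 := by
    rw [← Complex.exp_add]; simp
  have h2 := Complex.sin_sq_add_cos_sq ((θ : ℂ) / 2)
  simp [cinner, vcoh, Fin.sum_univ_two, ← Complex.exp_conj, -Complex.ofReal_cos,
    -Complex.ofReal_sin]
  push_cast
  linear_combination h2 + Complex.sin ((θ : ℂ) / 2) ^ 2 * h1

lemma sum_sq (v : Fin 2 → ℂ) (hv : cinner v v = 1) :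
    ∑ a, cinner v (hp a v) ^ 2 = 1 / 4 := by
  simp only [cinner, Fin.sum_univ_two] at hv
  simp [cinner, hp, pauli, Fin.sum_univ_two, Fin.sum_univ_three]
  ring_nf
  simp only [Complex.I_sq]
  linear_combination (1 / 4 : ℂ) * (conj (v 0) * v 0 + conj (v 1) * v 1 + 1) * hv

/-- with X_a = J_a / R_N, R_N = √(N²−1)/2, n = N−1, coherent states
    minimize the position uncertainty:
    Σ_a (⟨ξ, X_a² ξ⟩ − ⟨ξ, X_a ξ⟩²) = 2/(N+1) and Σ_a ⟨ξ, X_a ξ⟩² = (N−1)/(N+1). -/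
theorem coherent_state_uncertainty (N : ℕ) (hN : 2 ≤ N) (θ φ : ℝ)
    (X : Fin 3 → Matrix (Fin (N - 1) → Fin 2) (Fin (N - 1) → Fin 2) ℂ)
    (hX : ∀ a : Fin 3,
      X a = ((Real.sqrt ((N : ℝ) ^ 2 - 1) / 2 : ℝ) : ℂ)⁻¹ • Jmat (N - 1) a) :
    (∑ a : Fin 3,
        (cinner (tpow (N - 1) (vcoh θ φ)) ((X a * X a).mulVec (tpow (N - 1) (vcoh θ φ)))
          - (cinner (tpow (N - 1) (vcoh θ φ)) ((X a).mulVec (tpow (N - 1) (vcoh θ φ)))) ^ 2)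
      = 2 / ((N : ℂ) + 1)) ∧
    ∑ a : Fin 3,
        (cinner (tpow (N - 1) (vcoh θ φ)) ((X a).mulVec (tpow (N - 1) (vcoh θ φ)))) ^ 2
      = ((N : ℂ) - 1) / ((N : ℂ) + 1) := by
  generalize hnN : N - 1 = n at X hX
  obtain rfl : N = n + 1 := by omega
  have hv := vcoh_unit θ φ
  set v := vcoh θ φ with hvdef
  set c : ℂ := ((Real.sqrt (((n + 1 : ℕ) : ℝ) ^ 2 - 1) / 2 : ℝ) : ℂ)⁻¹ with hc
  have hn : (n : ℂ) ≠ 0 := by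
    have : n ≠ 0 := by omega
    exact_mod_cast this
  have hn2 : (n : ℂ) + 2 ≠ 0 := by exact_mod_cast (by omega : n + 2 ≠ 0)
  have hc2 : c ^ 2 = 4 / (n * (n + 2)) := by
    have h0 : (0 : ℝ) ≤ ((n + 1 : ℕ) : ℝ) ^ 2 - 1 := by push_cast; nlinarith [Nat.cast_nonneg (α := ℝ) n]
    rw [hc, inv_pow, ← Complex.ofReal_pow, div_pow, Real.sq_sqrt h0]
    push_cast
    rw [show ((n : ℂ) + 1) ^ 2 - 1 = n * (n + 2) by ring, inv_div]
    norm_num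
  have e1 : ∀ a, cinner (tpow n v) ((X a).mulVec (tpow n v)) ^ 2
      = c ^ 2 * n ^ 2 * cinner v (hp a v) ^ 2 := by
    intro a
    rw [hX a, Matrix.smul_mulVec, cinner_smul, exp_J a v hv]
    ring
  have e2 : ∀ a, cinner (tpow n v) ((X a * X a).mulVec (tpow n v))
      = c ^ 2 * (n / 4) + c ^ 2 * n * (n - 1) * cinner v (hp a v) ^ 2 := by
    intro a
    rw [hX a, Matrix.smul_mul, Matrix.mul_smul, Matrix.smul_mulVec, Matrix.smul_mulVec,
      cinner_smul, cinner_smul, exp_JJ a v hv, hp_hp, cinner_smul, hv]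
    ring
  have hs := sum_sq v hv
  have hn2' : (n : ℂ) + 1 + 1 ≠ 0 := by rwa [show (n : ℂ) + 1 + 1 = n + 2 by ring]
  simp only [e1, e2, Finset.sum_sub_distrib, Finset.sum_add_distrib, ← Finset.mul_sum, hs, hc2]
  simp only [Finset.sum_const, Finset.card_univ, Fintype.card_fin, nsmul_eq_mul]
  push_cast
  constructor <;> field_simp <;> ring
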